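/- Let σ₁, σ₂, σ₃ be the Pauli matrices and define the 4×4 complex matrices γ₀ = σ₃ ⊗ I₂, γ₁ = (iσ₂) ⊗ σ₁, γ₃ = (iσ₂) ⊗ σ₃, γ₄ = (iσ₁) ⊗ I₂ (Kronecker products), and set γ₊ = (γ₄ + γ₀)/√2. Let d₁, d₃ ∈ ℝ and suppose it is not the case that d₃ = 0 and 4d₁² = 1. Then the kernel of the matrix ((i + 2d₃)·γ₃ + 2d₁·γ₁)·γ₊ is a 2-dimensional complex subspace of ℂ⁴. In particular (taking d₁ = d₃ = 0) the kernel of γ₃γ₊, and hence of γ₊, is 2-dimensional. -/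

import Mathlib

open Matrix Complex
open scoped Kronecker

noncomputable section

/-- Pauli matrix σ₁. -/
def σ1 : Matrix (Fin 2) (Fin 2) ℂ := !![0, 1; 1, 0]
/-- Pauli matrix σ₂. -/
def σ2 : Matrix (Fin 2) (Fin 2) ℂ := !![0, -I; I, 0]
/-- Pauli matrix σ₃. -/
def σ3 : Matrix (Fin 2) (Fin 2) ℂ := !![1, 0; 0, -1]

/-- γ₀ = σ₃ ⊗ I₂ (timelike). -/
def γ0 : Matrix (Fin 2 × Fin 2) (Fin 2 × Fin 2) ℂ := σ3 ⊗ₖ (1 : Matrix (Fin 2) (Fin 2) ℂ)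
/-- γ₁ = (iσ₂) ⊗ σ₁. -/
def γ1 : Matrix (Fin 2 × Fin 2) (Fin 2 × Fin 2) ℂ := (I • σ2) ⊗ₖ σ1
/-- γ₂ = (iσ₂) ⊗ σ₂. -/
def γ2 : Matrix (Fin 2 × Fin 2) (Fin 2 × Fin 2) ℂ := (I • σ2) ⊗ₖ σ2
/-- γ₃ = (iσ₂) ⊗ σ₃. -/
def γ3 : Matrix (Fin 2 × Fin 2) (Fin 2 × Fin 2) ℂ := (I • σ2) ⊗ₖ σ3
/-- γ₄ = (iσ₁) ⊗ I₂. -/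
def γ4 : Matrix (Fin 2 × Fin 2) (Fin 2 × Fin 2) ℂ := (I • σ1) ⊗ₖ (1 : Matrix (Fin 2) (Fin 2) ℂ)

/-- γ₊ = (γ₄ + γ₀)/√2. -/
def γplus : Matrix (Fin 2 × Fin 2) (Fin 2 × Fin 2) ℂ :=
  ((Real.sqrt 2 : ℝ) : ℂ)⁻¹ • (γ4 + γ0)
/-- γ₋ = (γ₄ − γ₀)/√2. -/
def γminus : Matrix (Fin 2 × Fin 2) (Fin 2 × Fin 2) ℂ :=
  ((Real.sqrt 2 : ℝ) : ℂ)⁻¹ • (γ4 - γ0)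

/-! The null vector `γ₊` squares to zero, and its anticommutator with `γ₀ / √2` is the identity.
Thus `γ₀ / √2` is a contracting homotopy for the two-term periodic complex defined by `γ₊`, whose
kernel therefore equals its range and has half the dimension of the spinor space. The factor
`a γ₃ + c γ₁` multiplying `γ₊` squares to the scalar `-(a² + c²)`, so when `a² + c² ≠ 0` it is
invertible and does not change the kernel. -/

section ContractingHomotopy

theorem range_eq_ker_of_contracting_homotopy {R V : Type*} [Semiring R] [AddCommMonoid V]
    [Module R V] {f g : Module.End R V} (hf : f * f = 0) (hfg : f * g + g * f = 1) :
    LinearMap.range f = LinearMap.ker f := by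
  refine le_antisymm (LinearMap.range_le_ker_iff.2 hf) fun v hv => ⟨g v, ?_⟩
  simpa [LinearMap.mem_ker.1 hv] using LinearMap.congr_fun hfg v

theorem two_mul_finrank_ker_of_contracting_homotopy {K V : Type*} [DivisionRing K]
    [AddCommGroup V] [Module K V] [FiniteDimensional K V] {f g : Module.End K V}
    (hf : f * f = 0) (hfg : f * g + g * f = 1) :
    2 * Module.finrank K (LinearMap.ker f) = Module.finrank K V := by
  rw [← f.finrank_range_add_finrank_ker, range_eq_ker_of_contracting_homotopy hf hfg, two_mul]

theorem two_mul_finrank_ker_mulVecLin_of_contracting_homotopy {K n : Type*} [Field K]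
    [Fintype n] [DecidableEq n] {A B : Matrix n n K} (hA : A * A = 0) (hAB : A * B + B * A = 1) :
    2 * Module.finrank K (LinearMap.ker A.mulVecLin) = Fintype.card n := by
  have hf : A.mulVecLin * A.mulVecLin = 0 := by
    rw [Module.End.mul_eq_comp, ← mulVecLin_mul, hA, mulVecLin_zero]
  have hfg : A.mulVecLin * B.mulVecLin + B.mulVecLin * A.mulVecLin = 1 := by
    rw [Module.End.mul_eq_comp, Module.End.mul_eq_comp, ← mulVecLin_mul, ← mulVecLin_mul,
      ← mulVecLin_add, hAB, mulVecLin_one, Module.End.one_eq_id]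
  rw [two_mul_finrank_ker_of_contracting_homotopy hf hfg, Module.finrank_fintype_fun_eq_card]

end ContractingHomotopy

theorem ker_mulVecLin_mul_of_isUnit {R m n : Type*} [CommRing R] [Fintype m] [DecidableEq m]
    [Fintype n] {M : Matrix m m R} (hM : IsUnit M) (A : Matrix m n R) :
    LinearMap.ker (M * A).mulVecLin = LinearMap.ker A.mulVecLin := by
  rw [mulVecLin_mul, LinearMap.ker_comp_of_ker_eq_bot]
  exact LinearMap.ker_eq_bot.2 (mulVec_injective_of_isUnit hM)

section AnticommutingPair

variable {R A : Type*} [CommRing R] [Ring A] [Algebra R A] {x y : A} {p q : R}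

theorem smul_add_smul_mul_self_of_anticommute (hx : x * x = algebraMap R A p)
    (hy : y * y = algebraMap R A q) (hxy : x * y + y * x = 0) (a b : R) :
    (a • x + b • y) * (a • x + b • y) = algebraMap R A (a ^ 2 * p + b ^ 2 * q) := by
  calc (a • x + b • y) * (a • x + b • y)
      = (a ^ 2) • (x * x) + (a * b) • (x * y + y * x) + (b ^ 2) • (y * y) := by
        simp only [add_mul, mul_add, smul_mul_smul_comm, smul_add, sq, mul_comm b a]
        abel
    _ = algebraMap R A (a ^ 2 * p + b ^ 2 * q) := by
        rw [hx, hy, hxy, smul_zero, add_zero, map_add, map_mul, map_mul, Algebra.smul_def,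
          Algebra.smul_def]

theorem isUnit_of_mul_self_eq_algebraMap (hx : x * x = algebraMap R A p) (hp : IsUnit p) :
    IsUnit x :=
  isUnit_mul_self_iff.1 (hx ▸ hp.map (algebraMap R A))

end AnticommutingPair

section Pauli

theorem σ1_mul_self : σ1 * σ1 = 1 := by
  simp [σ1, one_fin_two]

theorem σ3_mul_self : σ3 * σ3 = 1 := by
  simp [σ3, one_fin_two]

theorem σ3_mul_σ1_add_σ1_mul_σ3 : σ3 * σ1 + σ1 * σ3 = 0 := by
  ext i j
  fin_cases i <;> fin_cases j <;> simp [σ1, σ3]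

theorem I_smul_σ2_mul_self : (I • σ2) * (I • σ2) = -1 := by
  simp [σ2, one_fin_two]

theorem I_smul_σ1_mul_self : (I • σ1) * (I • σ1) = -1 := by
  rw [smul_mul_smul_comm, I_mul_I, σ1_mul_self, neg_one_smul]

end Pauli

section Gamma

theorem γ0_mul_self : γ0 * γ0 = 1 := by
  rw [γ0, ← mul_kronecker_mul, σ3_mul_self, one_mul, one_kronecker_one]

theorem γ4_mul_self : γ4 * γ4 = -1 := by
  rw [γ4, ← mul_kronecker_mul, I_smul_σ1_mul_self, one_mul, ← neg_one_smul ℂ, smul_kronecker,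
    one_kronecker_one, neg_one_smul]

theorem γ4_mul_γ0_add_γ0_mul_γ4 : γ4 * γ0 + γ0 * γ4 = 0 := by
  rw [γ4, γ0, ← mul_kronecker_mul, ← mul_kronecker_mul, ← add_kronecker, smul_mul_assoc,
    mul_smul_comm, ← smul_add, add_comm, σ3_mul_σ1_add_σ1_mul_σ3, smul_zero, zero_kronecker]

theorem I_smul_σ2_kronecker_mul (A B : Matrix (Fin 2) (Fin 2) ℂ) :
    ((I • σ2) ⊗ₖ A) * ((I • σ2) ⊗ₖ B) = -(1 ⊗ₖ (A * B)) := by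
  rw [← mul_kronecker_mul, I_smul_σ2_mul_self, ← neg_one_smul ℂ, smul_kronecker, neg_one_smul]

theorem γ1_mul_self : γ1 * γ1 = -1 := by
  rw [γ1, I_smul_σ2_kronecker_mul, σ1_mul_self, one_kronecker_one]

theorem γ3_mul_self : γ3 * γ3 = -1 := by
  rw [γ3, I_smul_σ2_kronecker_mul, σ3_mul_self, one_kronecker_one]

theorem γ3_mul_γ1_add_γ1_mul_γ3 : γ3 * γ1 + γ1 * γ3 = 0 := by
  rw [γ3, γ1, I_smul_σ2_kronecker_mul, I_smul_σ2_kronecker_mul, ← neg_add, ← kronecker_add,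
    σ3_mul_σ1_add_σ1_mul_σ3, kronecker_zero, neg_zero]

theorem isUnit_smul_γ3_add_smul_γ1 {a c : ℂ} (hac : a ^ 2 + c ^ 2 ≠ 0) :
    IsUnit (a • γ3 + c • γ1) := by
  have hγ3 : γ3 * γ3 = algebraMap ℂ _ (-1) := by simp [γ3_mul_self]
  have hγ1 : γ1 * γ1 = algebraMap ℂ _ (-1) := by simp [γ1_mul_self]
  refine isUnit_of_mul_self_eq_algebraMap
    (smul_add_smul_mul_self_of_anticommute hγ3 hγ1 γ3_mul_γ1_add_γ1_mul_γ3 a c)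
    (isUnit_iff_ne_zero.2 ?_)
  rwa [mul_neg_one, mul_neg_one, ← neg_add, neg_ne_zero]

theorem γplus_mul_self : γplus * γplus = 0 := by
  have hγ4 : γ4 * γ4 = algebraMap ℂ _ (-1) := by simp [γ4_mul_self]
  have hγ0 : γ0 * γ0 = algebraMap ℂ _ 1 := by simp [γ0_mul_self]
  rw [γplus, smul_add, smul_add_smul_mul_self_of_anticommute hγ4 hγ0 γ4_mul_γ0_add_γ0_mul_γ4,
    mul_neg_one, mul_one, neg_add_cancel, map_zero]

theorem γplus_mul_γ0_add_γ0_mul_γplus :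
    γplus * γ0 + γ0 * γplus = ((Real.sqrt 2 : ℝ) : ℂ) • 1 := by
  set s : ℂ := ((Real.sqrt 2 : ℝ) : ℂ) with hs_def
  have hs : s * s = 2 := by rw [hs_def, ← ofReal_mul, Real.mul_self_sqrt zero_le_two, ofReal_ofNat]
  have hs₀ : s ≠ 0 := left_ne_zero_of_mul (hs ▸ two_ne_zero)
  calc γplus * γ0 + γ0 * γplus
      = s⁻¹ • (γ4 * γ0 + γ0 * γ4 + (γ0 * γ0 + γ0 * γ0)) := by
        rw [γplus, smul_mul_assoc, mul_smul_comm, ← smul_add, add_mul, mul_add, add_add_add_comm]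
    _ = s⁻¹ • (s * s) • 1 := by
        rw [γ4_mul_γ0_add_γ0_mul_γ4, γ0_mul_self, zero_add, hs, two_smul]
    _ = s • 1 := by rw [smul_smul, inv_mul_cancel_left₀ hs₀]

theorem finrank_ker_γplus : Module.finrank ℂ (LinearMap.ker γplus.mulVecLin) = 2 := by
  set s : ℂ := ((Real.sqrt 2 : ℝ) : ℂ) with hs_def
  have hs : s ≠ 0 := by simp [hs_def]
  have homotopy : γplus * (s⁻¹ • γ0) + (s⁻¹ • γ0) * γplus = 1 := by
    rw [mul_smul_comm, smul_mul_assoc, ← smul_add, γplus_mul_γ0_add_γ0_mul_γplus,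
      inv_smul_smul₀ hs]
  have half : 2 * Module.finrank ℂ (LinearMap.ker γplus.mulVecLin) = 4 := by
    simpa using
      two_mul_finrank_ker_mulVecLin_of_contracting_homotopy γplus_mul_self homotopy
  omega

theorem finrank_ker_mul_γplus_of_isUnit {M : Matrix (Fin 2 × Fin 2) (Fin 2 × Fin 2) ℂ}
    (hM : IsUnit M) : Module.finrank ℂ (LinearMap.ker (M * γplus).mulVecLin) = 2 := by
  rw [ker_mulVecLin_mul_of_isUnit hM, finrank_ker_γplus]

end Gamma

theorem I_add_ofReal_sq_add_ofReal_sq_eq_zero_iff (x y : ℝ) :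
    (I + x) ^ 2 + (y : ℂ) ^ 2 = 0 ↔ x = 0 ∧ y ^ 2 = 1 := by
  have expand : (I + x) ^ 2 + (y : ℂ) ^ 2 = ((x ^ 2 + y ^ 2 - 1 : ℝ) : ℂ) + (2 * x : ℝ) * I := by
    push_cast
    linear_combination I_sq
  rw [expand, Complex.ext_iff]
  simp only [add_re, add_im, re_ofReal_mul, im_ofReal_mul, ofReal_re, ofReal_im, I_re, I_im,
    zero_re, zero_im]
  constructor
  · rintro ⟨hre, him⟩
    obtain rfl : x = 0 := by linarith
    exact ⟨rfl, by linarith⟩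
  · rintro ⟨rfl, hy⟩
    constructor <;> linarith

/-- Unless `d₃ = 0` and `4d₁² = 1`, the kernel of `((i + 2d₃)γ₃ + 2d₁γ₁)γ₊` is a
2-dimensional complex subspace of `ℂ⁴`; in particular the kernels of `γ₃γ₊` and of
`γ₊` are 2-dimensional (the cases `X₉` and `X₆` of the Cahen–Wallach reductions). -/
theorem stmt_18 (d₁ d₃ : ℝ) (h : ¬(d₃ = 0 ∧ 4 * d₁ ^ 2 = 1)) :
    Module.finrank ℂ (LinearMap.ker
        (((I + ((2 * d₃ : ℝ) : ℂ)) • γ3 + ((2 * d₁ : ℝ) : ℂ) • γ1) * γplus).mulVecLin) = 2 ∧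
    Module.finrank ℂ (LinearMap.ker (γ3 * γplus).mulVecLin) = 2 ∧
    Module.finrank ℂ (LinearMap.ker γplus.mulVecLin) = 2 := by
  have hne : (I + ((2 * d₃ : ℝ) : ℂ)) ^ 2 + ((2 * d₁ : ℝ) : ℂ) ^ 2 ≠ 0 := fun h0 =>
    have ⟨h₃, h₁⟩ := (I_add_ofReal_sq_add_ofReal_sq_eq_zero_iff _ _).1 h0
    h ⟨by linarith, by linarith⟩
  have hγ3 : IsUnit γ3 := isUnit_mul_self_iff.1 (γ3_mul_self ▸ isUnit_one.neg)
  exact ⟨finrank_ker_mul_γplus_of_isUnit (isUnit_smul_γ3_add_smul_γ1 hne),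
    finrank_ker_mul_γplus_of_isUnit hγ3, finrank_ker_γplus⟩

end
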